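/- Let p, q, r : ℝ³×ℝ → ℝ be C^∞ and g(x,y,z,λ) = (p(x²,y²,z²,λ)x, q(x²,y²,z²,λ)y, r(x²,y²,z²,λ)z). Let (x,y,0,λ) be an xy-mixed mode solution, i.e. x ≠ 0, y ≠ 0, and p(u,v,0,λ) = q(u,v,0,λ) = 0 where u = x², v = y². Then the characteristic polynomial of the Jacobian of g with respect to (x,y,z) at (x,y,0,λ) equals (X − r)·(X² − 2(u·p_u + v·q_v)X + 4uv(p_u q_v − p_v q_u)), with r and all partial derivatives evaluated at (u,v,0,λ). Consequently, if Δ := (u·p_u − v·q_v)² + 4uv·p_v q_u ≥ 0, the eigenvalues are r and u·p_u + v·q_v ± √Δ. -/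

import Mathlib

open Polynomial

/-! Every component of `g` is a product with one factor vanishing at an `xy`-mixed mode, so its
derivative is the other factor times the derivative of the vanishing one. In the first two rows of
the Jacobian the vanishing factors are `p` and `q`, and their `z`-derivatives are zero because
`d(z²) = 0` at `z = 0`; in the third row it is `z`. The Jacobian is therefore block diagonal, with
a `2 × 2` block of trace `2 (u p_u + v q_v)` and determinant `4 u v (p_u q_v - p_v q_u)` and a
`1 × 1` block `r`. Completing the square in the quadratic factor leaves `Δ`. -/

section Algebra

variable {R : Type*} [CommRing R]

lemma charpoly_two_one_blockDiagonal (a b c d e : R) :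
    (!![a, b, 0; c, d, 0; 0, 0, e] : Matrix (Fin 3) (Fin 3) R).charpoly =
      (X - C e) * (!![a, b; c, d] : Matrix (Fin 2) (Fin 2) R).charpoly := by
  have hblocks : !![a, b, 0; c, d, 0; 0, 0, e] =
      Matrix.reindex finSumFinEquiv finSumFinEquiv
        (Matrix.fromBlocks !![a, b; c, d] 0 0 !![e]) := by
    ext i j
    fin_cases i <;> fin_cases j <;> rfl
  have hcorner : (!![e] : Matrix (Fin 1) (Fin 1) R).charpoly = X - C e := by
    simp [Matrix.charpoly]
  rw [hblocks, Matrix.charpoly_reindex, Matrix.charpoly_fromBlocks_zero₁₂, hcorner, mul_comm]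

lemma isRoot_monic_quadratic_iff [NoZeroDivisors R] {m d s : R} (hs : s ^ 2 = m ^ 2 - d) (μ : R) :
    (X ^ 2 - C (2 * m) * X + C d).IsRoot μ ↔ μ = m + s ∨ μ = m - s := by
  have eval_eq : (X ^ 2 - C (2 * m) * X + C d).eval μ = (μ - m) ^ 2 - s ^ 2 := by
    simp only [eval_add, eval_sub, eval_mul, eval_pow, eval_X, eval_C]
    linear_combination hs
  rw [IsRoot.def, eval_eq, sub_eq_zero, sq_eq_sq_iff_eq_or_eq_neg, sub_eq_iff_eq_add',
    sub_eq_iff_eq_add', ← sub_eq_add_neg]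

end Algebra

section Calculus

variable {𝕜 : Type*} [NontriviallyNormedField 𝕜]

lemma hasFDerivAt_smul_of_eq_zero {E F : Type*} [NormedAddCommGroup E] [NormedSpace 𝕜 E]
    [NormedAddCommGroup F] [NormedSpace 𝕜 F] {φ : E → 𝕜} {g : E → F} {g' : E →L[𝕜] F} {a : E}
    (hφ : ContinuousAt φ a) (hg : HasFDerivAt g g' a) (hga : g a = 0) :
    HasFDerivAt (fun v => φ v • g v) (φ a • g') a := by
  have hφ_sub : (fun v => φ v - φ a) =o[nhds a] fun _ => (1 : 𝕜) :=
    (Asymptotics.isLittleO_one_iff 𝕜).2 (tendsto_sub_nhds_zero_iff.2 hφ)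
  have hg_bound : g =O[nhds a] fun v => v - a := by
    simpa only [hga, sub_zero] using hg.isBigO_sub
  have h_rem : HasFDerivAt (fun v => (φ v - φ a) • g v) (0 : E →L[𝕜] F) a :=
    .of_isLittleO <| by simpa [hga] using hφ_sub.smul_isBigO hg_bound
  refine ((h_rem.add (hg.const_smul (φ a))).congr_fderiv (zero_add _)).congr_of_eventuallyEq ?_
  exact .of_forall fun v => by simp [sub_smul]

/-- The Jacobian matrix of a map between coordinate spaces, with `(i, j)` entry the `j`-th partial
derivative of the `i`-th component. It is zero where the map is not differentiable. -/
noncomputable def jacobian {ι κ : Type*} [DecidableEq ι]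
    (g : (ι → 𝕜) → κ → 𝕜) (a : ι → 𝕜) : Matrix κ ι 𝕜 :=
  .of fun i j => fderiv 𝕜 g a (Pi.single j 1) i

variable {Λ : Type*}

/-- The arguments `(x², y², z², λ)`, i.e. the basic invariants of `Z₂ × Z₂ × Z₂` and the bifurcation
parameter, at which the coefficients of an equivariant field are evaluated. -/
def squaredCoords (lam : Λ) (v : Fin 3 → 𝕜) : (𝕜 × 𝕜 × 𝕜) × Λ :=
  ((v 0 ^ 2, v 1 ^ 2, v 2 ^ 2), lam)

/-- The general `Z₂ × Z₂ × Z₂`-equivariant field in three state variables, with coefficients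
`p`, `q`, `r`, as a function of the state at a fixed value of the parameter. -/
def equivariantField (p q r : (𝕜 × 𝕜 × 𝕜) × Λ → 𝕜) (lam : Λ) (v : Fin 3 → 𝕜) : Fin 3 → 𝕜 :=
  ![p (squaredCoords lam v) * v 0, q (squaredCoords lam v) * v 1, r (squaredCoords lam v) * v 2]

lemma squaredCoords_mixedMode (lam : Λ) (x y : 𝕜) :
    squaredCoords lam ![x, y, 0] = ((x ^ 2, y ^ 2, 0), lam) := by
  simp [squaredCoords]

variable [NormedAddCommGroup Λ] [NormedSpace 𝕜 Λ]

variable (Λ) in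
/-- The derivative of `squaredCoords` at the state `a`. -/
def squaredCoordsDeriv (a : Fin 3 → 𝕜) : (Fin 3 → 𝕜) →L[𝕜] (𝕜 × 𝕜 × 𝕜) × Λ :=
  let dsq (i : Fin 3) : (Fin 3 → 𝕜) →L[𝕜] 𝕜 := (2 * a i) • .proj i
  ((dsq 0).prod ((dsq 1).prod (dsq 2))).prod 0

lemma hasFDerivAt_squaredCoords (lam : Λ) (a : Fin 3 → 𝕜) :
    HasFDerivAt (squaredCoords lam) (squaredCoordsDeriv Λ a) a := by
  have hsq (i : Fin 3) : HasFDerivAt (fun v : Fin 3 → 𝕜 => v i ^ 2)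
      ((2 * a i) • (.proj i : (Fin 3 → 𝕜) →L[𝕜] 𝕜)) a := by
    simpa using (hasFDerivAt_apply (𝕜 := 𝕜) i a).pow 2
  exact ((hsq 0).prodMk ((hsq 1).prodMk (hsq 2))).prodMk (hasFDerivAt_const lam a)

lemma hasFDerivAt_comp_squaredCoords_mul_of_eq_zero {f : (𝕜 × 𝕜 × 𝕜) × Λ → 𝕜}
    {f' : (𝕜 × 𝕜 × 𝕜) × Λ →L[𝕜] 𝕜} {lam : Λ} {a : Fin 3 → 𝕜}
    (hf : HasFDerivAt f f' (squaredCoords lam a)) (hf0 : f (squaredCoords lam a) = 0) (k : Fin 3) :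
    HasFDerivAt (fun v => f (squaredCoords lam v) * v k)
      (a k • f'.comp (squaredCoordsDeriv Λ a)) a :=
  (hasFDerivAt_smul_of_eq_zero (continuous_apply k).continuousAt
    (hf.comp a (hasFDerivAt_squaredCoords lam a)) hf0).congr_of_eventuallyEq
      (.of_forall fun _ => mul_comm _ _)

lemma hasFDerivAt_comp_squaredCoords_mul_of_coord_eq_zero {f : (𝕜 × 𝕜 × 𝕜) × Λ → 𝕜} {lam : Λ}
    {a : Fin 3 → 𝕜} {k : Fin 3} (hf : ContinuousAt f (squaredCoords lam a)) (hak : a k = 0) :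
    HasFDerivAt (fun v => f (squaredCoords lam v) * v k)
      (f (squaredCoords lam a) • (.proj k : (Fin 3 → 𝕜) →L[𝕜] 𝕜)) a :=
  hasFDerivAt_smul_of_eq_zero
    (hf.comp (hasFDerivAt_squaredCoords lam a).continuousAt) (hasFDerivAt_apply k a) hak

variable {p q r : (𝕜 × 𝕜 × 𝕜) × Λ → 𝕜} {p' q' : (𝕜 × 𝕜 × 𝕜) × Λ →L[𝕜] 𝕜} {x y : 𝕜} {lam : Λ}

lemma hasFDerivAt_equivariantField_mixedMode
    (hp : HasFDerivAt p p' ((x ^ 2, y ^ 2, 0), lam))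
    (hq : HasFDerivAt q q' ((x ^ 2, y ^ 2, 0), lam))
    (hr : ContinuousAt r ((x ^ 2, y ^ 2, 0), lam))
    (hmodep : p ((x ^ 2, y ^ 2, 0), lam) = 0) (hmodeq : q ((x ^ 2, y ^ 2, 0), lam) = 0) :
    HasFDerivAt (equivariantField p q r lam)
      (.pi ![x • p'.comp (squaredCoordsDeriv Λ ![x, y, 0]),
        y • q'.comp (squaredCoordsDeriv Λ ![x, y, 0]),
        r ((x ^ 2, y ^ 2, 0), lam) • .proj 2]) ![x, y, 0] := by
  simp only [← squaredCoords_mixedMode] at *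
  refine hasFDerivAt_pi'.2 fun i => ?_
  fin_cases i
  · exact hasFDerivAt_comp_squaredCoords_mul_of_eq_zero hp hmodep 0
  · exact hasFDerivAt_comp_squaredCoords_mul_of_eq_zero hq hmodeq 1
  · exact hasFDerivAt_comp_squaredCoords_mul_of_coord_eq_zero hr rfl

lemma jacobian_equivariantField_mixedMode
    (hp : HasFDerivAt p p' ((x ^ 2, y ^ 2, 0), lam))
    (hq : HasFDerivAt q q' ((x ^ 2, y ^ 2, 0), lam))
    (hr : ContinuousAt r ((x ^ 2, y ^ 2, 0), lam))
    (hmodep : p ((x ^ 2, y ^ 2, 0), lam) = 0) (hmodeq : q ((x ^ 2, y ^ 2, 0), lam) = 0) :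
    jacobian (equivariantField p q r lam) ![x, y, 0] =
      !![2 * x ^ 2 * p' ((1, 0, 0), 0), 2 * x * y * p' ((0, 1, 0), 0), 0;
        2 * x * y * q' ((1, 0, 0), 0), 2 * y ^ 2 * q' ((0, 1, 0), 0), 0;
        0, 0, r ((x ^ 2, y ^ 2, 0), lam)] := by
  have hx : squaredCoordsDeriv Λ ![x, y, 0] (Pi.single 0 1) = (2 * x) • ((1, 0, 0), 0) := by
    simp [squaredCoordsDeriv]
  have hy : squaredCoordsDeriv Λ ![x, y, 0] (Pi.single 1 1) = (2 * y) • ((0, 1, 0), 0) := by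
    simp [squaredCoordsDeriv]
  have hz : squaredCoordsDeriv Λ ![x, y, 0] (Pi.single 2 1) = 0 := by
    simp [squaredCoordsDeriv]
  ext i j
  rw [jacobian, (hasFDerivAt_equivariantField_mixedMode hp hq hr hmodep hmodeq).fderiv]
  -- Multiplying out `(2 * x) • ((1, 0, 0), 0)` would keep `map_smul` from applying.
  fin_cases i <;> fin_cases j <;> simp [hx, hy, hz, -Prod.smul_mk] <;> ring

theorem stmt14_general
    (hp : HasFDerivAt p p' ((x ^ 2, y ^ 2, 0), lam))
    (hq : HasFDerivAt q q' ((x ^ 2, y ^ 2, 0), lam))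
    (hr : ContinuousAt r ((x ^ 2, y ^ 2, 0), lam))
    (hmodep : p ((x ^ 2, y ^ 2, 0), lam) = 0) (hmodeq : q ((x ^ 2, y ^ 2, 0), lam) = 0)
    {J : Matrix (Fin 3) (Fin 3) 𝕜} (hJ : J = jacobian (equivariantField p q r lam) ![x, y, 0])
    {pu pv qu qv r0 : 𝕜} (hpu : pu = p' ((1, 0, 0), 0)) (hpv : pv = p' ((0, 1, 0), 0))
    (hqu : qu = q' ((1, 0, 0), 0)) (hqv : qv = q' ((0, 1, 0), 0))
    (hr0 : r0 = r ((x ^ 2, y ^ 2, 0), lam)) :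
    J.charpoly =
      (X - C r0) *
        (X ^ 2 - C (2 * (x ^ 2 * pu + y ^ 2 * qv)) * X +
          C (4 * x ^ 2 * y ^ 2 * (pu * qv - pv * qu))) ∧
    ∀ s : 𝕜, s ^ 2 = (x ^ 2 * pu - y ^ 2 * qv) ^ 2 + 4 * x ^ 2 * y ^ 2 * pv * qu →
      ∀ μ : 𝕜, J.charpoly.IsRoot μ ↔
        μ = r0 ∨ μ = x ^ 2 * pu + y ^ 2 * qv + s ∨ μ = x ^ 2 * pu + y ^ 2 * qv - s := by
  have hchar : J.charpoly = (X - C r0) *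
      (X ^ 2 - C (2 * (x ^ 2 * pu + y ^ 2 * qv)) * X +
        C (4 * x ^ 2 * y ^ 2 * (pu * qv - pv * qu))) := by
    rw [hJ, jacobian_equivariantField_mixedMode hp hq hr hmodep hmodeq, ← hpu, ← hpv, ← hqu, ← hqv,
      ← hr0, charpoly_two_one_blockDiagonal, Matrix.charpoly_fin_two, Matrix.trace_fin_two_of,
      Matrix.det_fin_two_of]
    congr 4 <;> ring_nf
  refine ⟨hchar, fun s hs μ => ?_⟩
  rw [hchar, root_mul, root_X_sub_C, eq_comm, isRoot_monic_quadratic_iff]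
  linear_combination hs

end Calculus

/-- for `g(x,y,z,λ) = (p(x²,y²,z²,λ)x, q(x²,y²,z²,λ)y,
r(x²,y²,z²,λ)z)` with `p, q, r` smooth, at an `xy`-mixed mode solution
(`x ≠ 0`, `y ≠ 0`, `p(u,v,0,λ) = q(u,v,0,λ) = 0` with `u = x²`, `v = y²`) the
characteristic polynomial of the Jacobian `J` of `g` with respect to `(x,y,z)`
is `(X − r)·(X² − 2(u·p_u + v·q_v)X + 4uv(p_u q_v − p_v q_u))`; consequently,
if `Δ = (u·p_u − v·q_v)² + 4uv·p_v q_u ≥ 0`, the eigenvalues (roots of the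
characteristic polynomial) are exactly `r` and `u·p_u + v·q_v ± √Δ`. -/
theorem stmt14 (p q r : (ℝ × ℝ × ℝ) × ℝ → ℝ)
    (hp : ContDiff ℝ (⊤ : ℕ∞) p) (hq : ContDiff ℝ (⊤ : ℕ∞) q) (hr : ContDiff ℝ (⊤ : ℕ∞) r)
    (x y lam : ℝ) (hx : x ≠ 0) (hy : y ≠ 0)
    (hmodep : p ((x ^ 2, y ^ 2, 0), lam) = 0)
    (hmodeq : q ((x ^ 2, y ^ 2, 0), lam) = 0)
    (J : Matrix (Fin 3) (Fin 3) ℝ)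
    (hJ : ∀ i j : Fin 3, J i j =
      (fderiv ℝ (fun v : Fin 3 → ℝ =>
          ![p ((v 0 ^ 2, v 1 ^ 2, v 2 ^ 2), lam) * v 0,
            q ((v 0 ^ 2, v 1 ^ 2, v 2 ^ 2), lam) * v 1,
            r ((v 0 ^ 2, v 1 ^ 2, v 2 ^ 2), lam) * v 2])
        ![x, y, 0] (Pi.single j 1)) i)
    (pu pv qu qv r0 : ℝ)
    (hpu : pu = fderiv ℝ p ((x ^ 2, y ^ 2, 0), lam) ((1, 0, 0), 0))
    (hpv : pv = fderiv ℝ p ((x ^ 2, y ^ 2, 0), lam) ((0, 1, 0), 0))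
    (hqu : qu = fderiv ℝ q ((x ^ 2, y ^ 2, 0), lam) ((1, 0, 0), 0))
    (hqv : qv = fderiv ℝ q ((x ^ 2, y ^ 2, 0), lam) ((0, 1, 0), 0))
    (hr0 : r0 = r ((x ^ 2, y ^ 2, 0), lam)) :
    J.charpoly =
      (X - C r0) *
        (X ^ 2 - C (2 * (x ^ 2 * pu + y ^ 2 * qv)) * X +
          C (4 * x ^ 2 * y ^ 2 * (pu * qv - pv * qu))) ∧
    (0 ≤ (x ^ 2 * pu - y ^ 2 * qv) ^ 2 + 4 * x ^ 2 * y ^ 2 * pv * qu →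
      ∀ μ : ℝ, J.charpoly.IsRoot μ ↔
        μ = r0 ∨
        μ = x ^ 2 * pu + y ^ 2 * qv +
          Real.sqrt ((x ^ 2 * pu - y ^ 2 * qv) ^ 2 + 4 * x ^ 2 * y ^ 2 * pv * qu) ∨
        μ = x ^ 2 * pu + y ^ 2 * qv -
          Real.sqrt ((x ^ 2 * pu - y ^ 2 * qv) ^ 2 + 4 * x ^ 2 * y ^ 2 * pv * qu)) := by
  have h := stmt14_general (hp.differentiable (by simp) _).hasFDerivAt
    (hq.differentiable (by simp) _).hasFDerivAt hr.continuous.continuousAt hmodep hmodeq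
    (Matrix.ext hJ) hpu hpv hqu hqv hr0
  exact ⟨h.1, fun hΔ => h.2 _ (Real.sq_sqrt hΔ)⟩
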